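/- Let E = E(2,M,p) be a planar fractal percolation with integer M ≥ 2 and p ∈ (0,1). For every u > 1 there exists r = r(u) > 0 (one may take r = √2·(u−1)²·p²) such that for every n ≥ 1, every segment ℓ ∈ 𝔏 and every real R with 0 < R < |ℓ| (the length of ℓ), the conditional probability satisfies ℙ( L_n(ℓ) > p·u·L_{n−1}(ℓ) | L_{n−1}(ℓ) ≥ R ) < exp( −r·M^{n−1}·R ). -/

import Mathlib

open MeasureTheory Set ENNReal ProbabilityTheory Real

noncomputable section

/-- The alphabet indexing the `M^d` subcubes of a cube in `[0,1]^d`. -/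
abbrev Alpha (d M : ℕ) : Type := Fin d → Fin M

/-- Finite nonempty words over the alphabet; they index `M`-adic cubes. -/
abbrev Word (d M : ℕ) : Type := {w : List (Alpha d M) // w ≠ []}

/-- The sample space: `{0,1}`-labelings of all finite nonempty words. -/
abbrev PercSpace (d M : ℕ) : Type := Word d M → Bool

/-- `P` is the product measure making the labels i.i.d. Bernoulli(`p`). -/
def IsBernoulliPerc (d M : ℕ) (p : ℝ) (P : Measure (PercSpace d M)) : Prop :=
  IsProbabilityMeasure P ∧
    ∀ (S : Finset (Word d M)) (b : Word d M → Bool),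
      P {ω | ∀ w ∈ S, ω w = b w} =
        ∏ w ∈ S, if b w then ENNReal.ofReal p else ENNReal.ofReal (1 - p)

/-- A level-`w.length` cube is retained iff its word and every nonempty prefix
of its word carry label 1. -/
def Retained (d M : ℕ) (ω : PercSpace d M) (w : List (Alpha d M)) : Prop :=
  ∀ (u : List (Alpha d M)) (hu : u ≠ []), u <+: w → ω ⟨u, hu⟩ = true

/-- The `i`-th coordinate of the lower-left corner of the cube indexed by `w`. -/
def wordBase (d M : ℕ) (w : List (Alpha d M)) (i : Fin d) : ℝ :=
  ∑ j : Fin w.length, ((w.get j) i : ℝ) * (M : ℝ) ^ (-(j : ℤ) - 1)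

/-- The closed `M`-adic cube of level `w.length` indexed by the word `w`. -/
def wordCube (d M : ℕ) (w : List (Alpha d M)) : Set (EuclideanSpace ℝ (Fin d)) :=
  {x | ∀ i, wordBase d M w i ≤ x i ∧ x i ≤ wordBase d M w i + (M : ℝ) ^ (-(w.length : ℤ))}

/-- `E_n`, the union of the retained level-`n` cubes. -/
def approx (d M : ℕ) (ω : PercSpace d M) (n : ℕ) : Set (EuclideanSpace ℝ (Fin d)) :=
  ⋃ w ∈ {w : List (Alpha d M) | w.length = n ∧ Retained d M ω w}, wordCube d M w

/-- The fractal percolation set `E = ⋂_{n ≥ 1} E_n`. -/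
def percLimit (d M : ℕ) (ω : PercSpace d M) : Set (EuclideanSpace ℝ (Fin d)) :=
  ⋂ n ∈ {n : ℕ | 1 ≤ n}, approx d M ω n

/-- The segment cut out of `[0,1]²` by the line through `z` with direction `v`. -/
def lineSeg (z v : EuclideanSpace ℝ (Fin 2)) : Set (EuclideanSpace ℝ (Fin 2)) :=
  {x | (∃ t : ℝ, x = z + t • v) ∧ ∀ i, 0 ≤ x i ∧ x i ≤ 1}

/-- The line through `z` with direction `v` meets the open unit square. -/
def MeetsOpenSquare (z v : EuclideanSpace ℝ (Fin 2)) : Prop :=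
  ∃ t : ℝ, ∀ i, 0 < (z + t • v) i ∧ (z + t • v) i < 1

/-- The line with direction `v` makes an acute angle `> θ` with both coordinate
axes (the angle with the `x`-axis has sine `|v 1|/‖v‖`, the one with the
`y`-axis has sine `|v 0|/‖v‖`). -/
def AngleSep (θ : ℝ) (v : EuclideanSpace ℝ (Fin 2)) : Prop :=
  Real.sin θ * ‖v‖ < |v 1| ∧ Real.sin θ * ‖v‖ < |v 0|

/-!
Whether a level-`n` cube is retained depends on the labels of levels at most `n` only. Given these
labels, cut `E_n` into the level-`(n + 1)` subcubes of its retained cubes: `E_{n+1}` keeps each of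
them independently with probability `p`. So, conditionally, `L_{n+1}(ℓ)` is a weighted Bernoulli sum
whose weights `aᵢ` add up to `L_n(ℓ)`, because `ℓ` meets the common faces of the cubes in finitely
many points, and are at most the diameter `K = √d M^{-(n+1)}` of a cube. As `∑ aᵢ² ≤ K L_n(ℓ)`,
Hoeffding's inequality bounds the probability of an excess of `p (u - 1) L_n(ℓ)` over the mean by
`exp(-2 (p (u - 1))² L_n(ℓ) / K)`.
-/

section Cubes

variable {d M : ℕ}

/-- The integers `k_i` for which the cube of the word `w` of length `n` is
`∏ᵢ [kᵢ M⁻ⁿ, (kᵢ + 1) M⁻ⁿ]`; the letters of `w` are the base-`M` digits of `kᵢ`, most significant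
first, whereas `Nat.ofDigits` expects the least significant digit first. -/
def wordIndex (w : List (Alpha d M)) (i : Fin d) : ℕ :=
  Nat.ofDigits M (w.map fun c ↦ (c i : ℕ)).reverse

lemma wordIndex_cons (c : Alpha d M) (w : List (Alpha d M)) (i : Fin d) :
    wordIndex (c :: w) i = wordIndex w i + M ^ w.length * c i := by
  simp [wordIndex, Nat.ofDigits_append]

lemma wordIndex_concat (w : List (Alpha d M)) (c : Alpha d M) (i : Fin d) :
    wordIndex (w ++ [c]) i = c i + M * wordIndex w i := by
  simp [wordIndex, Nat.ofDigits_cons]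

lemma eq_of_wordIndex_eq (hM : 1 < M) {w w' : List (Alpha d M)} (hlen : w.length = w'.length)
    (h : ∀ i, wordIndex w i = wordIndex w' i) : w = w' := by
  have hdigits (i : Fin d) : w.map (fun c ↦ (c i : ℕ)) = w'.map fun c ↦ (c i : ℕ) :=
    List.reverse_injective <| Nat.ofDigits_inj_of_len_eq hM (by simpa using hlen)
      (by simp) (by simp) (h i)
  refine List.ext_getElem hlen fun j hj hj' ↦ funext fun i ↦ Fin.ext ?_
  simpa [hj, hj'] using congrArg (·[j]?) (hdigits i)

lemma wordBase_cons (hM : M ≠ 0) (c : Alpha d M) (w : List (Alpha d M)) (i : Fin d) :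
    wordBase d M (c :: w) i = (c i + wordBase d M w i) / M := by
  have hM' : (M : ℝ) ≠ 0 := mod_cast hM
  have hshift (j : ℕ) : (M : ℝ) ^ (-((j + 1 : ℕ) : ℤ) - 1) = (M : ℝ) ^ (-(j : ℤ) - 1) / M := by
    rw [div_eq_mul_inv, ← zpow_sub_one₀ hM']
    push_cast
    ring_nf
  rw [wordBase, wordBase, add_div, Finset.sum_div]
  refine (Fin.sum_univ_succ (n := w.length) _).trans (congrArg₂ _ ?_ ?_)
  · rw [Fin.val_zero, Nat.cast_zero, neg_zero, zero_sub, zpow_neg_one, div_eq_mul_inv]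
    rfl
  · refine Finset.sum_congr rfl fun j _ ↦ ?_
    rw [Fin.val_succ, hshift, mul_div_assoc]
    rfl

lemma wordBase_eq (hM : M ≠ 0) (w : List (Alpha d M)) (i : Fin d) :
    wordBase d M w i = wordIndex w i / (M : ℝ) ^ w.length := by
  have hM' : (M : ℝ) ≠ 0 := mod_cast hM
  induction w with
  | nil => simp [wordBase, wordIndex]
  | cons c w ih =>
    rw [wordBase_cons hM, wordIndex_cons, ih, List.length_cons]
    push_cast
    field_simp
    ring

lemma mem_wordCube_iff (hM : M ≠ 0) {w : List (Alpha d M)} {x : EuclideanSpace ℝ (Fin d)} :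
    x ∈ wordCube d M w ↔
      ∀ i, (M : ℝ) ^ w.length * x i ∈ Icc (wordIndex w i : ℝ) (wordIndex w i + 1) := by
  have hpow : (0 : ℝ) < (M : ℝ) ^ w.length := pow_pos (mod_cast hM.bot_lt) _
  refine forall_congr' fun i ↦ ?_
  rw [wordBase_eq hM, zpow_neg, zpow_natCast, ← one_div, ← add_div, div_le_iff₀' hpow,
    le_div_iff₀' hpow, mem_Icc]

lemma exists_fin_mul_mem_Icc (hM : M ≠ 0) {t : ℝ} (ht : t ∈ Icc (0 : ℝ) 1) :
    ∃ c : Fin M, (M : ℝ) * t ∈ Icc (c : ℝ) (c + 1) := by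
  obtain ⟨N, rfl⟩ := Nat.exists_eq_succ_of_ne_zero hM
  rcases ht.2.eq_or_lt with rfl | ht1
  · exact ⟨Fin.last N, by simp⟩
  · have hMt : (0 : ℝ) ≤ (N.succ : ℝ) * t := mul_nonneg (Nat.cast_nonneg _) ht.1
    have hlt : ⌊(N.succ : ℝ) * t⌋₊ < N.succ :=
      (Nat.floor_lt hMt).2 (mul_lt_of_lt_one_right (by positivity) ht1)
    exact ⟨⟨_, hlt⟩, Nat.floor_le hMt, (Nat.lt_floor_add_one _).le⟩

lemma wordCube_eq_iUnion_concat (hM : M ≠ 0) (w : List (Alpha d M)) :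
    wordCube d M w = ⋃ c, wordCube d M (w ++ [c]) := by
  ext x
  simp only [mem_iUnion, mem_wordCube_iff hM, wordIndex_concat, List.length_append,
    List.length_singleton, pow_succ, mem_Icc]
  push_cast
  constructor
  · intro hx
    choose c hc using fun i ↦ exists_fin_mul_mem_Icc hM
      (t := (M : ℝ) ^ w.length * x i - wordIndex w i)
      ⟨sub_nonneg.2 (hx i).1, sub_le_iff_le_add'.2 (hx i).2⟩
    exact ⟨c, fun i ↦ ⟨by linarith [(hc i).1], by linarith [(hc i).2]⟩⟩
  · rintro ⟨c, hc⟩ i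
    have hM0 : (0 : ℝ) < M := mod_cast hM.bot_lt
    have hci : (c i : ℝ) + 1 ≤ M := mod_cast (c i).2
    exact ⟨le_of_mul_le_mul_left (by linarith [(hc i).1]) hM0,
      le_of_mul_le_mul_left (by linarith [(hc i).2]) hM0⟩

lemma wordCube_inter_subset_hyperplane (hM : 1 < M) {w w' : List (Alpha d M)}
    (hlen : w.length = w'.length) (hne : w ≠ w') :
    ∃ (i : Fin d) (y : ℝ), wordCube d M w ∩ wordCube d M w' ⊆ {x | x i = y} := by
  obtain ⟨i, hi⟩ : ∃ i, wordIndex w i ≠ wordIndex w' i :=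
    not_forall.1 fun h ↦ hne (eq_of_wordIndex_eq hM hlen h)
  wlog hlt : wordIndex w i < wordIndex w' i generalizing w w'
  · rw [inter_comm]
    exact this hlen.symm hne.symm hi.symm (hi.lt_or_gt.resolve_left hlt)
  have hpow : (0 : ℝ) < (M : ℝ) ^ w.length := by positivity
  refine ⟨i, wordIndex w' i / (M : ℝ) ^ w.length, fun x ⟨hx, hx'⟩ ↦ ?_⟩
  have hle : (wordIndex w i : ℝ) + 1 ≤ wordIndex w' i := mod_cast hlt
  have hupper := ((mem_wordCube_iff (by lia)).1 hx i).2
  have hlower := ((mem_wordCube_iff (by lia)).1 hx' i).1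
  rw [← hlen] at hlower
  rw [mem_ofPred_eq, eq_div_iff hpow.ne']
  linarith

lemma wordCube_eq_preimage_Icc (w : List (Alpha d M)) :
    wordCube d M w = WithLp.ofLp ⁻¹'
      Icc (wordBase d M w) (fun i ↦ wordBase d M w i + (M : ℝ) ^ (-(w.length : ℤ))) := by
  ext x
  simp only [wordCube, mem_ofPred_eq, mem_preimage, mem_Icc, Pi.le_def, forall_and]

lemma measurableSet_wordCube (w : List (Alpha d M)) : MeasurableSet (wordCube d M w) := by
  rw [wordCube_eq_preimage_Icc]
  exact (isClosed_Icc.preimage (PiLp.continuous_ofLp 2 _)).measurableSet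

lemma ediam_wordCube_le (w : List (Alpha d M)) :
    Metric.ediam (wordCube d M w) ≤ ENNReal.ofReal (√d * (M : ℝ) ^ (-(w.length : ℤ))) := by
  have hcard : (((Fintype.card (Fin d) : NNReal) ^ (1 / (2 : ℝ≥0∞)).toReal : NNReal) : ℝ≥0∞) =
      ENNReal.ofReal √d := by
    rw [ENNReal.ofReal, Real.sqrt_eq_rpow]
    congr 1
    ext
    simp [Real.coe_toNNReal _ (Real.rpow_nonneg (Nat.cast_nonneg d) _)]
  rw [ENNReal.ofReal_mul (Real.sqrt_nonneg _), ← hcard]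
  refine Metric.ediam_le fun x hx y hy ↦ (PiLp.antilipschitzWith_ofLp 2 _ x y).trans ?_
  refine mul_le_mul_right (edist_pi_le_iff.2 fun i ↦ ?_) _
  rw [edist_dist]
  refine ENNReal.ofReal_le_ofReal ?_
  simpa using Real.dist_le_of_mem_Icc (hx i) (hy i)

lemma measure_biUnion_wordCube (hM : 1 < M) {ν : Measure (EuclideanSpace ℝ (Fin d))}
    (hν : ∀ (i : Fin d) (y : ℝ), ν {x | x i = y} = 0) {n : ℕ} {T : Finset (Word d M)}
    (hlen : ∀ w ∈ T, w.1.length = n) (hfin : ∀ w ∈ T, ν (wordCube d M w) ≠ ∞) :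
    ν (⋃ w ∈ T, wordCube d M w) = ENNReal.ofReal (∑ w ∈ T, ν.real (wordCube d M w)) := by
  rw [measure_biUnion_finset₀, ENNReal.ofReal_sum_of_nonneg fun _ _ ↦ measureReal_nonneg]
  · exact Finset.sum_congr rfl fun w hw ↦ (ofReal_measureReal (hfin w hw)).symm
  · intro w hw w' hw' hne
    obtain ⟨i, y, hsub⟩ := wordCube_inter_subset_hyperplane hM
      ((hlen w hw).trans (hlen w' hw').symm) (Subtype.val_injective.ne hne)
    exact measure_mono_null hsub (hν i y)
  · exact fun w _ ↦ (measurableSet_wordCube w.1).nullMeasurableSet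

end Cubes

section Lines

lemma hausdorffMeasure_one_le_ediam {E : Type*} [NormedAddCommGroup E] [NormedSpace ℝ E]
    [MeasurableSpace E] [BorelSpace E] {s : Set E} (hs : Collinear ℝ s) :
    μH[1] s ≤ Metric.ediam s := by
  obtain ⟨p₀, v, hv⟩ := (collinear_iff_exists_forall_eq_smul_vadd s).1 hs
  rcases eq_or_ne v 0 with rfl | hv0
  · have := Measure.nullSingletonClass_hausdorff E one_pos
    have hsub : s.Subsingleton := fun x hx y hy ↦ by
      obtain ⟨_, rfl⟩ := hv x hx
      obtain ⟨_, rfl⟩ := hv y hy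
      simp
    exact (hsub.measure_zero _).trans_le zero_le
  · set f : ℝ → E := fun t ↦ t • (‖v‖⁻¹ • v) + p₀
    have hf : Isometry f := Isometry.of_dist_eq fun a b ↦ by
      simp [f, dist_eq_norm, ← sub_smul, norm_smul, hv0]
    have hsf : f '' (f ⁻¹' s) = s := image_preimage_eq_of_subset fun x hx ↦ by
      obtain ⟨r, rfl⟩ := hv x hx
      exact ⟨r * ‖v‖, by simp [f, smul_smul, hv0]⟩
    rw [← hsf, hf.hausdorffMeasure_image (Or.inl zero_le_one), hf.ediam_image,
      hausdorffMeasure_real]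
    exact Real.volume_le_diam _

variable {d M : ℕ} {z v : EuclideanSpace ℝ (Fin d)} {S : Set (EuclideanSpace ℝ (Fin d))}

lemma collinear_of_subset_range (hS : S ⊆ range fun t : ℝ ↦ z + t • v) : Collinear ℝ S :=
  (collinear_iff_exists_forall_eq_smul_vadd S).2 ⟨z, v, fun x hx ↦ by
    obtain ⟨t, rfl⟩ := hS hx
    exact ⟨t, add_comm _ _⟩⟩

lemma hausdorffMeasure_wordCube_inter_le (hS : Collinear ℝ S) (w : List (Alpha d M)) :
    μH[1] (wordCube d M w ∩ S) ≤ ENNReal.ofReal (√d * (M : ℝ) ^ (-(w.length : ℤ))) :=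
  calc μH[1] (wordCube d M w ∩ S)
      ≤ Metric.ediam (wordCube d M w ∩ S) :=
        hausdorffMeasure_one_le_ediam (hS.subset inter_subset_right)
    _ ≤ Metric.ediam (wordCube d M w) := Metric.ediam_mono inter_subset_left
    _ ≤ _ := ediam_wordCube_le w

lemma hausdorffMeasure_hyperplane_inter_eq_zero (hS : S ⊆ range fun t : ℝ ↦ z + t • v)
    {i : Fin d} (hv : v i ≠ 0) (y : ℝ) : μH[1] ({x | x i = y} ∩ S) = 0 := by
  have := Measure.nullSingletonClass_hausdorff (EuclideanSpace ℝ (Fin d)) one_pos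
  refine Set.Subsingleton.measure_zero (fun x hx x' hx' ↦ ?_) _
  obtain ⟨t, rfl⟩ := hS hx.2
  obtain ⟨t', rfl⟩ := hS hx'.2
  have htt' : t * v i = t' * v i := by simpa using hx.1.trans hx'.1.symm
  rw [mul_right_cancel₀ hv htt']

lemma lineSeg_subset_range (z v : EuclideanSpace ℝ (Fin 2)) :
    lineSeg z v ⊆ range fun t : ℝ ↦ z + t • v :=
  fun _ hx ↦ hx.1.imp fun _ ↦ Eq.symm

lemma measurableSet_lineSeg (z v : EuclideanSpace ℝ (Fin 2)) : MeasurableSet (lineSeg z v) := by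
  have hline : lineSeg z v = (AffineSubspace.mk' z (ℝ ∙ v) : Set (EuclideanSpace ℝ (Fin 2))) ∩
      ⋂ i, (fun x : EuclideanSpace ℝ (Fin 2) ↦ x i) ⁻¹' Icc (0 : ℝ) 1 := by
    ext x
    simp [lineSeg, Submodule.mem_span_singleton, AffineSubspace.mem_mk', eq_comm,
      eq_sub_iff_add_eq']
  rw [hline]
  exact ((AffineSubspace.closed_of_finiteDimensional _).inter (isClosed_iInter fun i ↦
    isClosed_Icc.preimage (by fun_prop))).measurableSet

end Lines

section BooleanProducts

lemma iIndepFun_of_measure_forall_mem_eq {Ω ι α : Type*} [MeasurableSpace Ω] {P : Measure Ω}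
    [IsProbabilityMeasure P] [Countable α] [Nonempty α] [MeasurableSpace α]
    [MeasurableSingletonClass α] {X : ι → Ω → α} (hX : ∀ i, Measurable (X i))
    (h : ∀ (s : Finset ι) (b : ι → α), P {ω | ∀ i ∈ s, X i ω = b i} = ∏ i ∈ s, P (X i ⁻¹' {b i})) :
    iIndepFun X P := by
  refine iIndepFun_iff_finset.2 fun s ↦ ?_
  have hXs (i : s) : Measurable (s.restrict X i) := hX i
  have (i : s) : IsProbabilityMeasure (P.map (s.restrict X i)) :=
    Measure.isProbabilityMeasure_map (hXs i).aemeasurable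
  rw [iIndepFun_iff_map_fun_eq_pi_map fun i ↦ (hXs i).aemeasurable]
  refine Measure.ext_of_singleton fun b ↦ ?_
  have hb := h s (Function.extend Subtype.val b fun _ ↦ Classical.arbitrary α)
  have hext (i : s) : Function.extend Subtype.val b (fun _ ↦ Classical.arbitrary α) i.1 = b i :=
    Subtype.val_injective.extend_apply b _ i
  rw [Measure.pi_singleton, Measure.map_apply (measurable_pi_iff.2 hXs) (measurableSet_singleton b)]
  convert hb using 1
  · congr 1
    ext ω
    simp only [mem_preimage, mem_singleton_iff, funext_iff, Subtype.forall', hext,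
      Finset.restrict, mem_ofPred_eq]
  · refine (Finset.prod_congr rfl fun i _ ↦ ?_).trans (Finset.prod_coe_sort s _)
    rw [Measure.map_apply (hXs i) (measurableSet_singleton _), hext]
    rfl

lemma exists_eq_preimage_restrict_of_dependsOn {ι α : Type*} {A : Set (ι → α)} {F : Finset ι}
    (hA : DependsOn (· ∈ A) F) : ∃ A' : Set (F → α), A = F.restrict ⁻¹' A' := by
  obtain ⟨A', hA'⟩ := dependsOn_iff_exists_comp.1 hA
  exact ⟨{x | A' x}, Set.ext fun ω ↦ (congrFun hA' ω).to_iff⟩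

section Coordinates

variable {ι α : Type*} [Countable α] [MeasurableSpace α] [MeasurableSingletonClass α]
  {P : Measure (ι → α)} {F G : Finset ι} {A B : Set (ι → α)}

lemma measurableSet_of_dependsOn (hA : DependsOn (· ∈ A) F) : MeasurableSet A := by
  obtain ⟨A', rfl⟩ := exists_eq_preimage_restrict_of_dependsOn hA
  exact F.measurable_restrict .of_discrete

lemma measure_inter_eq_mul_of_dependsOn (hind : iIndepFun (fun i (ω : ι → α) ↦ ω i) P)
    (hFG : Disjoint F G) (hA : DependsOn (· ∈ A) F) (hB : DependsOn (· ∈ B) G) :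
    P (A ∩ B) = P A * P B := by
  obtain ⟨A', rfl⟩ := exists_eq_preimage_restrict_of_dependsOn hA
  obtain ⟨B', rfl⟩ := exists_eq_preimage_restrict_of_dependsOn hB
  exact (hind.indepFun_finset F G hFG fun i ↦ measurable_pi_apply i).measure_inter_preimage_eq_mul
    A' B' .of_discrete .of_discrete

end Coordinates

lemma measure_preimage_inter_le_of_fiberwise {Ω α : Type*} [MeasurableSpace Ω] {P : Measure Ω}
    {X : Ω → α} {s : Finset α} (hX : ∀ x ∈ s, MeasurableSet (X ⁻¹' {x})) {B : Set Ω} {c : ℝ≥0∞}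
    (h : ∀ x ∈ s, P (X ⁻¹' {x} ∩ B) ≤ c * P (X ⁻¹' {x})) :
    P (X ⁻¹' s ∩ B) ≤ c * P (X ⁻¹' s) :=
  calc P (X ⁻¹' s ∩ B)
      = P (⋃ x ∈ s, X ⁻¹' {x} ∩ B) := by
        rw [← iUnion₂_inter, ← preimage_iUnion₂]
        congr 3
        exact (biUnion_of_singleton (s : Set α)).symm
    _ ≤ ∑ x ∈ s, P (X ⁻¹' {x} ∩ B) := measure_biUnion_finset_le _ _
    _ ≤ ∑ x ∈ s, c * P (X ⁻¹' {x}) := Finset.sum_le_sum h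
    _ = c * P (X ⁻¹' s) := by rw [← Finset.mul_sum, sum_measure_preimage_singleton s hX]

section WeightedBernoulliSums

variable {Ω ι : Type*} [MeasurableSpace Ω] {P : Measure Ω} [IsProbabilityMeasure P]
  {ξ : ι → Ω → Bool} {p : ℝ}

lemma hasSubgaussianMGF_bernoulli_mul {η : Ω → Bool} (hη : Measurable η) (hp : 0 ≤ p)
    (hmean : P (η ⁻¹' {true}) = ENNReal.ofReal p) (a : ℝ) :
    HasSubgaussianMGF (fun ω ↦ (if η ω then a else 0) - p * a) ((‖a‖₊ / 2) ^ 2) P := by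
  have hind : (fun ω ↦ if η ω then a else 0) = (η ⁻¹' {true}).indicator fun _ ↦ a := by
    classical
    ext ω
    simp [Set.indicator_apply]
  have hint : ∫ ω, (if η ω then a else 0) ∂P = p * a := by
    rw [hind, integral_indicator_const _ (hη (measurableSet_singleton _)), Measure.real, hmean,
      ENNReal.toReal_ofReal hp, smul_eq_mul]
  have hmeas : Measurable fun ω ↦ if η ω then a else 0 :=
    (measurable_of_finite fun b : Bool ↦ if b then a else 0).comp hη
  have := hasSubgaussianMGF_of_mem_Icc (μ := P) (a := min 0 a) (b := max 0 a) hmeas.aemeasurable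
    (.of_forall fun ω ↦ by by_cases h : η ω = true <;> simp [h])
  rwa [hint, show ‖max 0 a - min 0 a‖₊ = ‖a‖₊ by
    rw [max_sub_min_eq_abs, sub_zero, Real.nnnorm_abs]] at this

lemma measureReal_bernoulli_sum_ge_le (hξ : ∀ i, Measurable (ξ i)) (hind : iIndepFun ξ P)
    (hp : 0 ≤ p) (hmean : ∀ i, P (ξ i ⁻¹' {true}) = ENNReal.ofReal p) (a : ι → ℝ) (T : Finset ι)
    {ε : ℝ} (hε : 0 ≤ ε) :
    P.real {ω | p * ∑ i ∈ T, a i + ε ≤ ∑ i ∈ T with ξ i ω, a i} ≤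
      Real.exp (-(2 * ε ^ 2 / ∑ i ∈ T, a i ^ 2)) := by
  have hcentered : iIndepFun (fun i ω ↦ (if ξ i ω then a i else 0) - p * a i) P :=
    hind.comp (fun i b ↦ (if b then a i else 0) - p * a i) fun i ↦ measurable_of_finite _
  have hHoeffding := HasSubgaussianMGF.measure_sum_ge_le_of_iIndepFun hcentered (s := T)
    (fun i _ ↦ hasSubgaussianMGF_bernoulli_mul (hξ i) hp (hmean i) (a i)) hε
  convert hHoeffding using 3
  · ext ω
    rw [Finset.sum_sub_distrib, ← Finset.mul_sum, Finset.sum_filter,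
      le_sub_iff_add_le']
  · have hvar : ∀ i, (‖a i‖ / 2) ^ 2 = a i ^ 2 / 4 := fun i ↦ by
      rw [div_pow, Real.norm_eq_abs, sq_abs]
      norm_num
    push_cast
    simp only [hvar, ← Finset.sum_div]
    rw [neg_div, ← mul_div_assoc, ← mul_div_mul_left (ε ^ 2) _ (two_ne_zero (α := ℝ)),
      ← mul_div_assoc, ← mul_assoc]
    norm_num

lemma measure_bernoulli_sum_gt_le (hξ : ∀ i, Measurable (ξ i)) (hind : iIndepFun ξ P)
    (hp : 0 ≤ p) (hmean : ∀ i, P (ξ i ⁻¹' {true}) = ENNReal.ofReal p) {u : ℝ} (hu : 1 ≤ u)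
    {a : ι → ℝ} {K : ℝ} (hK : 0 < K) {T : Finset ι} (ha : ∀ i ∈ T, a i ∈ Icc 0 K) :
    P {ω | p * u * ∑ i ∈ T, a i < ∑ i ∈ T with ξ i ω, a i} ≤
      ENNReal.ofReal (Real.exp (-(2 * (p * (u - 1)) ^ 2 * (∑ i ∈ T, a i) / K))) := by
  set A := ∑ i ∈ T, a i
  have hA : 0 ≤ A := Finset.sum_nonneg fun i hi ↦ (ha i hi).1
  have hsq : ∑ i ∈ T, a i ^ 2 ≤ K * A := by
    rw [Finset.mul_sum]
    exact Finset.sum_le_sum fun i hi ↦ by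
      rw [sq]
      exact mul_le_mul_of_nonneg_right (ha i hi).2 (ha i hi).1
  have hexp : 2 * (p * (u - 1)) ^ 2 * A / K ≤
      2 * (p * (u - 1) * A) ^ 2 / ∑ i ∈ T, a i ^ 2 := by
    rcases (Finset.sum_nonneg fun i _ ↦ sq_nonneg (a i) : 0 ≤ ∑ i ∈ T, a i ^ 2).eq_or_lt
      with hzero | hpos
    · have hA0 : A = 0 := Finset.sum_eq_zero fun i hi ↦ pow_eq_zero_iff two_ne_zero |>.1 <|
        (Finset.sum_eq_zero_iff_of_nonneg fun i _ ↦ sq_nonneg (a i)).1 hzero.symm i hi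
      simp [hA0]
    · rw [div_le_div_iff₀ hK hpos]
      calc 2 * (p * (u - 1)) ^ 2 * A * ∑ i ∈ T, a i ^ 2
          ≤ 2 * (p * (u - 1)) ^ 2 * A * (K * A) := by gcongr
        _ = 2 * (p * (u - 1) * A) ^ 2 * K := by ring
  calc P {ω | p * u * A < ∑ i ∈ T with ξ i ω, a i}
      ≤ P {ω | p * A + p * (u - 1) * A ≤ ∑ i ∈ T with ξ i ω, a i} :=
        measure_mono <| ofPred_subset_ofPred.2 fun ω hω ↦ by linarith
    _ = ENNReal.ofReal (P.real {ω | p * A + p * (u - 1) * A ≤ ∑ i ∈ T with ξ i ω, a i}) :=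
        (ofReal_measureReal).symm
    _ ≤ ENNReal.ofReal (Real.exp (-(2 * (p * (u - 1) * A) ^ 2 / ∑ i ∈ T, a i ^ 2))) :=
        ENNReal.ofReal_le_ofReal <| measureReal_bernoulli_sum_ge_le hξ hind hp hmean a T
          (mul_nonneg (mul_nonneg hp (sub_nonneg.2 hu)) hA)
    _ ≤ _ := ENNReal.ofReal_le_ofReal <| Real.exp_le_exp.2 <| neg_le_neg hexp

end WeightedBernoulliSums

lemma measure_random_bernoulli_sum_gt_le {ι : Type*} {P : Measure (ι → Bool)}
    [IsProbabilityMeasure P] (hind : iIndepFun (fun i (ω : ι → Bool) ↦ ω i) P) {p : ℝ}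
    (hp : 0 ≤ p) (hmean : ∀ i, P {ω | ω i = true} = ENNReal.ofReal p) {u : ℝ} (hu : 1 ≤ u)
    {F G : Finset ι} (hFG : Disjoint F G) {a : ι → ℝ} {K : ℝ} (hK : 0 < K)
    (ha : ∀ i ∈ G, a i ∈ Icc 0 K) {T : (ι → Bool) → Finset ι} (hT : DependsOn T F)
    (hTG : ∀ ω, T ω ⊆ G) (R : ℝ) :
    P ({ω | R ≤ ∑ i ∈ T ω, a i} ∩
        {ω | p * u * ∑ i ∈ T ω, a i < ∑ i ∈ T ω with ω i = true, a i}) ≤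
      ENNReal.ofReal (Real.exp (-(2 * (p * (u - 1)) ^ 2 * R / K))) *
        P {ω | R ≤ ∑ i ∈ T ω, a i} := by
  classical
  have hfiber (t : Finset ι) : DependsOn (· ∈ T ⁻¹' {t}) (F : Set ι) := fun ω ω' h ↦ by
    simp only [mem_preimage, hT h]
  have hevent : {ω | R ≤ ∑ i ∈ T ω, a i} =
      T ⁻¹' (G.powerset.filter fun t ↦ R ≤ ∑ i ∈ t, a i : Finset (Finset ι)) := by
    ext ω
    simp [hTG ω]
  rw [hevent]
  refine measure_preimage_inter_le_of_fiberwise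
    (fun t _ ↦ measurableSet_of_dependsOn (hfiber t)) fun t ht ↦ ?_
  obtain ⟨htG, htR⟩ := Finset.mem_filter.1 ht
  rw [Finset.mem_powerset] at htG
  set B := {ω : ι → Bool | p * u * ∑ i ∈ t, a i < ∑ i ∈ t with ω i = true, a i}
  have hB : DependsOn (· ∈ B) (G : Set ι) := fun ω ω' h ↦ by
    simp only [B, mem_ofPred_eq]
    rw [Finset.filter_congr fun i hi ↦ by rw [h i (htG hi)]]
  have hBle : P B ≤ ENNReal.ofReal (Real.exp (-(2 * (p * (u - 1)) ^ 2 * R / K))) :=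
    (measure_bernoulli_sum_gt_le measurable_pi_apply hind hp hmean hu hK
      fun i hi ↦ ha i (htG hi)).trans <| ENNReal.ofReal_le_ofReal <| by gcongr
  calc P (T ⁻¹' {t} ∩ _)
      ≤ P (T ⁻¹' {t} ∩ B) := measure_mono <| by
        rintro ω ⟨rfl, hω⟩
        exact ⟨rfl, hω⟩
    _ = P (T ⁻¹' {t}) * P B := measure_inter_eq_mul_of_dependsOn hind hFG (hfiber t) hB
    _ ≤ _ := by
      rw [mul_comm]
      gcongr

end BooleanProducts

section Percolation

variable {d M : ℕ} {p : ℝ} {P : Measure (PercSpace d M)}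

namespace IsBernoulliPerc

lemma measure_label_eq (hP : IsBernoulliPerc d M p P) (w : Word d M) (b : Bool) :
    P {ω | ω w = b} = if b then ENNReal.ofReal p else ENNReal.ofReal (1 - p) := by
  simpa using hP.2 {w} fun _ ↦ b

lemma iIndepFun_labels (hP : IsBernoulliPerc d M p P) :
    iIndepFun (fun (w : Word d M) (ω : PercSpace d M) ↦ ω w) P :=
  have := hP.1
  iIndepFun_of_measure_forall_mem_eq measurable_pi_apply fun s b ↦
    (hP.2 s b).trans <| Finset.prod_congr rfl fun w _ ↦ (hP.measure_label_eq w (b w)).symm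

end IsBernoulliPerc

lemma retained_concat_iff {ω : PercSpace d M} {w : List (Alpha d M)} {c : Alpha d M} :
    Retained d M ω (w ++ [c]) ↔ Retained d M ω w ∧ ω ⟨w ++ [c], by simp⟩ = true := by
  refine ⟨fun h ↦ ⟨fun u hu hpre ↦ h u hu (hpre.trans (List.prefix_append _ _)),
    h _ _ List.prefix_rfl⟩, fun ⟨hw, hlabel⟩ u hu hpre ↦ ?_⟩
  rcases List.prefix_concat_iff.1 hpre with rfl | hpre
  · exact hlabel
  · exact hw u hu hpre

lemma retained_iff_dropLast {ω : PercSpace d M} (w : Word d M) :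
    Retained d M ω w ↔ Retained d M ω w.1.dropLast ∧ ω w = true := by
  simpa only [List.dropLast_append_getLast] using
    retained_concat_iff (ω := ω) (w := w.1.dropLast) (c := w.1.getLast w.2)

lemma retained_congr {ω ω' : PercSpace d M} {w : List (Alpha d M)}
    (h : ∀ u : Word d M, u.1.length ≤ w.length → ω u = ω' u) :
    Retained d M ω w ↔ Retained d M ω' w :=
  forall_congr' fun u ↦ forall_congr' fun hu ↦ forall_congr' fun hpre ↦ by
    rw [h ⟨u, hu⟩ hpre.length_le]

/-- The nonempty words of length at most `n`, whose labels determine `E_n`. -/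
def wordsUpTo (d M n : ℕ) : Finset (Word d M) :=
  ((List.finite_length_le (Alpha d M) n).preimage Subtype.val_injective.injOn).toFinset

/-- The words of length `n`, for `n ≥ 1`. -/
def wordsOfLength (d M n : ℕ) : Finset (Word d M) :=
  ((List.finite_length_eq (Alpha d M) n).preimage Subtype.val_injective.injOn).toFinset

lemma mem_wordsUpTo {n : ℕ} {w : Word d M} : w ∈ wordsUpTo d M n ↔ w.1.length ≤ n := by
  simp [wordsUpTo]

lemma mem_wordsOfLength {n : ℕ} {w : Word d M} : w ∈ wordsOfLength d M n ↔ w.1.length = n := by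
  simp [wordsOfLength]

lemma disjoint_wordsUpTo_wordsOfLength_succ (n : ℕ) :
    Disjoint (wordsUpTo d M n) (wordsOfLength d M (n + 1)) :=
  Finset.disjoint_left.2 fun w hle heq ↦ by
    rw [mem_wordsUpTo] at hle
    rw [mem_wordsOfLength] at heq
    lia

open Classical in
/-- The level-`(n + 1)` words whose parent is retained. The cubes of these words make up `E_n`, and
those of them with label `1` make up `E_{n+1}`. -/
def candidateWords (d M n : ℕ) (ω : PercSpace d M) : Finset (Word d M) :=
  {w ∈ wordsOfLength d M (n + 1) | Retained d M ω w.1.dropLast}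

lemma mem_candidateWords {n : ℕ} {ω : PercSpace d M} {w : Word d M} :
    w ∈ candidateWords d M n ω ↔ w.1.length = n + 1 ∧ Retained d M ω w.1.dropLast := by
  simp [candidateWords, mem_wordsOfLength]

lemma dependsOn_candidateWords (n : ℕ) : DependsOn (candidateWords d M n) (wordsUpTo d M n) := by
  intro ω ω' h
  ext w
  simp only [mem_candidateWords]
  refine and_congr_right fun hw ↦ retained_congr fun u hu ↦ h u ?_
  rw [List.length_dropLast] at hu
  exact mem_wordsUpTo.2 (by lia)

lemma approx_eq_biUnion_candidateWords (hM : M ≠ 0) (n : ℕ) (ω : PercSpace d M) :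
    approx d M ω n = ⋃ w ∈ candidateWords d M n ω, wordCube d M w := by
  ext x
  simp only [approx, mem_iUnion, mem_ofPred_eq, mem_candidateWords, exists_prop]
  constructor
  · rintro ⟨w, ⟨hlen, hw⟩, hx⟩
    rw [wordCube_eq_iUnion_concat hM, mem_iUnion] at hx
    obtain ⟨c, hc⟩ := hx
    exact ⟨⟨w ++ [c], by simp⟩, ⟨by simp [hlen], by simpa using hw⟩, hc⟩
  · rintro ⟨⟨w, hne⟩, ⟨hlen, hw⟩, hx⟩
    refine ⟨w.dropLast, ⟨by simp [hlen], hw⟩, ?_⟩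
    rw [wordCube_eq_iUnion_concat hM, mem_iUnion]
    exact ⟨w.getLast hne, by rwa [List.dropLast_append_getLast]⟩

lemma approx_succ_eq_biUnion_candidateWords (n : ℕ) (ω : PercSpace d M) :
    approx d M ω (n + 1) = ⋃ w ∈ (candidateWords d M n ω).filter (ω ·), wordCube d M w := by
  ext x
  simp only [approx, mem_iUnion, mem_ofPred_eq, Finset.mem_filter, mem_candidateWords, exists_prop]
  constructor
  · rintro ⟨w, ⟨hlen, hw⟩, hx⟩
    have hne : w ≠ [] := List.ne_nil_of_length_eq_add_one hlen
    obtain ⟨hparent, hlabel⟩ := (retained_iff_dropLast ⟨w, hne⟩).1 hw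
    exact ⟨⟨w, hne⟩, ⟨⟨hlen, hparent⟩, hlabel⟩, hx⟩
  · rintro ⟨w, ⟨⟨hlen, hparent⟩, hlabel⟩, hx⟩
    exact ⟨w.1, ⟨hlen, (retained_iff_dropLast w).2 ⟨hparent, hlabel⟩⟩, hx⟩

lemma measurableSet_approx_mem (hM : M ≠ 0) (n : ℕ) (C : Set (Set (EuclideanSpace ℝ (Fin d)))) :
    MeasurableSet {ω | approx d M ω n ∈ C} :=
  measurableSet_of_dependsOn (F := wordsUpTo d M n) fun ω ω' h ↦ by
    simp only [mem_ofPred_eq, approx_eq_biUnion_candidateWords hM, dependsOn_candidateWords n h]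

theorem measure_approx_large_deviation (hM : 1 < M) (hP : IsBernoulliPerc d M p P) (hp : 0 ≤ p)
    {u : ℝ} (hu : 1 ≤ u) {ν : Measure (EuclideanSpace ℝ (Fin d))}
    (hν : ∀ (i : Fin d) (y : ℝ), ν {x | x i = y} = 0) {n : ℕ} {K : ℝ} (hK : 0 < K)
    (hνK : ∀ w ∈ wordsOfLength d M (n + 1), ν (wordCube d M w) ≤ ENNReal.ofReal K) (R : ℝ) :
    P ({ω | ENNReal.ofReal R ≤ ν (approx d M ω n)} ∩
        {ω | ENNReal.ofReal (p * u) * ν (approx d M ω n) < ν (approx d M ω (n + 1))}) ≤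
      ENNReal.ofReal (Real.exp (-(2 * (p * (u - 1)) ^ 2 * R / K))) *
        P {ω | ENNReal.ofReal R ≤ ν (approx d M ω n)} := by
  have := hP.1
  set a : Word d M → ℝ := fun w ↦ ν.real (wordCube d M w)
  have ha : ∀ w ∈ wordsOfLength d M (n + 1), a w ∈ Icc 0 K := fun w hw ↦
    ⟨measureReal_nonneg, ENNReal.toReal_le_of_le_ofReal hK.le (hνK w hw)⟩
  have hsub (ω : PercSpace d M) : candidateWords d M n ω ⊆ wordsOfLength d M (n + 1) :=
    fun w hw ↦ mem_wordsOfLength.2 (mem_candidateWords.1 hw).1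
  have hsum {T : Finset (Word d M)} (hT : T ⊆ wordsOfLength d M (n + 1)) :
      ν (⋃ w ∈ T, wordCube d M w) = ENNReal.ofReal (∑ w ∈ T, a w) :=
    measure_biUnion_wordCube hM hν (fun w hw ↦ mem_wordsOfLength.1 (hT hw))
      fun w hw ↦ ((hνK w (hT hw)).trans_lt ENNReal.ofReal_lt_top).ne
  have hparent (ω : PercSpace d M) :
      ν (approx d M ω n) = ENNReal.ofReal (∑ w ∈ candidateWords d M n ω, a w) := by
    rw [approx_eq_biUnion_candidateWords (by lia), hsum (hsub ω)]
  have hchild (ω : PercSpace d M) :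
      ν (approx d M ω (n + 1)) =
        ENNReal.ofReal (∑ w ∈ candidateWords d M n ω with ω w = true, a w) := by
    rw [approx_succ_eq_biUnion_candidateWords, hsum ((Finset.filter_subset _ _).trans (hsub ω))]
  have hsum_nonneg (ω : PercSpace d M) : 0 ≤ ∑ w ∈ candidateWords d M n ω, a w :=
    Finset.sum_nonneg fun w hw ↦ (ha w (hsub ω hw)).1
  have hpu : 0 ≤ p * u := mul_nonneg hp (by linarith)
  simp only [hparent, hchild, ← ENNReal.ofReal_mul hpu,
    ENNReal.ofReal_le_ofReal_iff (hsum_nonneg _),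
    ENNReal.ofReal_lt_ofReal_iff_of_nonneg (mul_nonneg hpu (hsum_nonneg _))]
  exact measure_random_bernoulli_sum_gt_le hP.iIndepFun_labels hp
    (fun w ↦ hP.measure_label_eq w true) hu (disjoint_wordsUpTo_wordsOfLength_succ n) hK ha
    (dependsOn_candidateWords n) hsub R

end Percolation

lemma cond_le_of_measure_inter_le {Ω : Type*} [MeasurableSpace Ω] {P : Measure Ω} {s t : Set Ω}
    (hs : MeasurableSet s) {c : ℝ≥0∞} (h : P (s ∩ t) ≤ c * P s) : P[t | s] ≤ c := by
  rw [cond_apply hs, mul_comm, ← div_eq_mul_inv]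
  exact ENNReal.div_le_of_le_mul h

theorem measure_slice_large_deviation {d M : ℕ} [NeZero d] (hM : 1 < M) {p : ℝ} (hp : 0 ≤ p)
    {P : Measure (PercSpace d M)} (hP : IsBernoulliPerc d M p P) {u : ℝ} (hu : 1 ≤ u) (n : ℕ)
    {z v : EuclideanSpace ℝ (Fin d)} (hv : ∀ i, v i ≠ 0) {S : Set (EuclideanSpace ℝ (Fin d))}
    (hSm : MeasurableSet S) (hS : S ⊆ range fun t : ℝ ↦ z + t • v) (R : ℝ) :
    P ({ω | ENNReal.ofReal R ≤ μH[1] (approx d M ω n ∩ S)} ∩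
        {ω | ENNReal.ofReal (p * u) * μH[1] (approx d M ω n ∩ S) <
          μH[1] (approx d M ω (n + 1) ∩ S)}) ≤
      ENNReal.ofReal (Real.exp (-(2 / √d * (p * (u - 1)) ^ 2 * (M : ℝ) ^ (n + 1) * R))) *
        P {ω | ENNReal.ofReal R ≤ μH[1] (approx d M ω n ∩ S)} := by
  have hd : 0 < √(d : ℝ) := Real.sqrt_pos.2 (Nat.cast_pos.2 (NeZero.pos d))
  have hcube : ∀ w ∈ wordsOfLength d M (n + 1),
      (μH[1] : Measure _).restrict S (wordCube d M w) ≤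
        ENNReal.ofReal (√d * (M : ℝ) ^ (-((n + 1 : ℕ) : ℤ))) := fun w hw ↦ by
    rw [Measure.restrict_apply' hSm, ← mem_wordsOfLength.1 hw]
    exact hausdorffMeasure_wordCube_inter_le (collinear_of_subset_range hS) w.1
  have hplane (i : Fin d) (y : ℝ) : (μH[1] : Measure _).restrict S {x | x i = y} = 0 := by
    rw [Measure.restrict_apply' hSm]
    exact hausdorffMeasure_hyperplane_inter_eq_zero hS (hv i) y
  have hbound := measure_approx_large_deviation hM hP hp hu hplane (by positivity) hcube R
  have hrate : 2 * (p * (u - 1)) ^ 2 * R / (√d * (M : ℝ) ^ (-((n + 1 : ℕ) : ℤ))) =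
      2 / √d * (p * (u - 1)) ^ 2 * (M : ℝ) ^ (n + 1) * R := by
    rw [zpow_neg, zpow_natCast]
    field_simp
  simpa only [Measure.restrict_apply' hSm, hrate] using hbound

theorem slice_large_deviation_general {d M : ℕ} [NeZero d] (hM : 1 < M) {p : ℝ} (hp : 0 ≤ p)
    {P : Measure (PercSpace d M)} (hP : IsBernoulliPerc d M p P) {u : ℝ} (hu : 1 ≤ u) {r : ℝ}
    (hr : r < 2 / √d * (p * (u - 1)) ^ 2 * M) (n : ℕ) {z v : EuclideanSpace ℝ (Fin d)}
    (hv : ∀ i, v i ≠ 0) {S : Set (EuclideanSpace ℝ (Fin d))} (hSm : MeasurableSet S)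
    (hS : S ⊆ range fun t : ℝ ↦ z + t • v) {R : ℝ} (hR : 0 < R) :
    P[{ω | ENNReal.ofReal (p * u) * μH[1] (approx d M ω n ∩ S) <
        μH[1] (approx d M ω (n + 1) ∩ S)} |
      {ω | ENNReal.ofReal R ≤ μH[1] (approx d M ω n ∩ S)}] <
      ENNReal.ofReal (Real.exp (-(r * (M : ℝ) ^ n * R))) := by
  have hrate : r * (M : ℝ) ^ n * R < 2 / √d * (p * (u - 1)) ^ 2 * (M : ℝ) ^ (n + 1) * R := by
    have hpow : (0 : ℝ) < (M : ℝ) ^ n := pow_pos (by positivity) n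
    rw [pow_succ' (M : ℝ), ← mul_assoc]
    exact mul_lt_mul_of_pos_right (mul_lt_mul_of_pos_right hr hpow) hR
  calc _ ≤ ENNReal.ofReal
          (Real.exp (-(2 / √d * (p * (u - 1)) ^ 2 * (M : ℝ) ^ (n + 1) * R))) :=
        cond_le_of_measure_inter_le
          (measurableSet_approx_mem (by lia) n {C | ENNReal.ofReal R ≤ μH[1] (C ∩ S)})
          (measure_slice_large_deviation hM hp hP hu n hv hSm hS R)
    _ < _ := (ENNReal.ofReal_lt_ofReal_iff (Real.exp_pos _)).2 <|
        Real.exp_lt_exp.2 <| neg_lt_neg hrate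

/-- large-deviation estimate for the slice lengths: for every
`u > 1` there is `r > 0` such that for all `n ≥ 1`, `ℓ ∈ 𝔏` and `0 < R < |ℓ|`,
`ℙ(L_n(ℓ) > p u L_{n-1}(ℓ) ∣ L_{n-1}(ℓ) ≥ R) < exp(-r M^{n-1} R)`. -/
theorem slice_large_deviation
    (M : ℕ) (hM : 2 ≤ M) (p : ℝ) (hp0 : 0 < p) (hp1 : p < 1)
    (P : Measure (PercSpace 2 M)) (hP : IsBernoulliPerc 2 M p P)
    (u : ℝ) (hu : 1 < u) :
    ∃ r : ℝ, 0 < r ∧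
      ∀ n : ℕ, 1 ≤ n → ∀ z v : EuclideanSpace ℝ (Fin 2),
        v 0 ≠ 0 → v 1 ≠ 0 → MeetsOpenSquare z v →
      ∀ R : ℝ, 0 < R → ENNReal.ofReal R < μH[1] (lineSeg z v) →
        ProbabilityTheory.cond P
            {ω | ENNReal.ofReal R ≤ μH[1] (approx 2 M ω (n - 1) ∩ lineSeg z v)}
            {ω | ENNReal.ofReal (p * u) * μH[1] (approx 2 M ω (n - 1) ∩ lineSeg z v) <
                  μH[1] (approx 2 M ω n ∩ lineSeg z v)} <
          ENNReal.ofReal (Real.exp (-(r * (M : ℝ) ^ ((n : ℤ) - 1) * R))) := by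
  have hrate : 0 < √2 * (p * (u - 1)) ^ 2 :=
    mul_pos (by positivity) (pow_pos (mul_pos hp0 (sub_pos.2 hu)) 2)
  have hgain : √2 * (p * (u - 1)) ^ 2 < 2 / √(2 : ℕ) * (p * (u - 1)) ^ 2 * M := by
    rw [Nat.cast_ofNat, Real.div_sqrt]
    exact lt_mul_of_one_lt_right hrate (mod_cast hM)
  refine ⟨√2 * (p * (u - 1)) ^ 2, hrate, fun n hn z v hv0 hv1 _ R hR _ ↦ ?_⟩
  obtain ⟨m, rfl⟩ := Nat.exists_eq_add_of_le' hn
  simpa using slice_large_deviation_general hM hp0.le hP hu.le hgain m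
    (Fin.forall_fin_two.2 ⟨hv0, hv1⟩) (measurableSet_lineSeg z v) (lineSeg_subset_range z v) hR
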